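/- Let d ≥ 1, r ≥ 0 and let a = (a_1, …, a_ℓ) ∈ Red(w^{(d,r)}) be any reduced word, with reflection order ro(a) = (γ_1, …, γ_ℓ), ℓ = d(d+r). Then the filling B_a of D(Z(d,r)) defined by B_a(x) = the unique t with γ_t = f(x) is a balanced shifted tableau of shape Z(d,r). -/

import Mathlib

open scoped BigOperators

namespace BST

/-- `lam` (1-indexed, with `d` parts) is a strict partition: strictly decreasing
positive parts `lam 1 > lam 2 > ⋯ > lam d > 0`. -/
def IsStrictPartition (d : ℕ) (lam : ℕ → ℕ) : Prop :=
  (∀ i : ℕ, 1 ≤ i → i < d → lam (i + 1) < lam i) ∧ 1 ≤ lam d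

/-- The size `|λ| = λ_1 + ⋯ + λ_d`. -/
def sizeP (d : ℕ) (lam : ℕ → ℕ) : ℕ := ∑ i ∈ Finset.Icc 1 d, lam i

/-- The shifted diagram `D(λ) ⊆ ℤ × ℤ`: row `i` (1 ≤ i ≤ d) occupies columns
`i - d, …, λ_i + i - d - 1`. -/
def Diagram (d : ℕ) (lam : ℕ → ℕ) : Set (ℤ × ℤ) :=
  {p : ℤ × ℤ | 1 ≤ p.1 ∧ p.1 ≤ (d : ℤ) ∧ p.1 - (d : ℤ) ≤ p.2 ∧
    p.2 + (d : ℤ) + 1 ≤ (lam p.1.toNat : ℤ) + p.1}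

/-- The hook `H(i,c)`. -/
def Hook (d : ℕ) (lam : ℕ → ℕ) (i c : ℤ) : Set (ℤ × ℤ) :=
  {(i, c)} ∪ {p ∈ Diagram d lam | (p.1 = i ∧ c < p.2) ∨ (p.2 = c ∧ i < p.1)} ∪
    {p ∈ Diagram d lam | c < 0 ∧ p.1 = (d : ℤ) + 1 + c}

/-- The extended hook `H̃(i,c)`. -/
def ExtHook (d : ℕ) (lam : ℕ → ℕ) (i c : ℤ) : Set (ℤ × ℤ) :=
  Hook d lam i c ∪ {p : ℤ × ℤ | c < 0 ∧ p = ((d : ℤ) + 1 + c, c)}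

/-- The extended diagram `D(λ) ∪ {(i, i - d - 1) : 1 ≤ i ≤ d}`. -/
def ExtDiagram (d : ℕ) (lam : ℕ → ℕ) : Set (ℤ × ℤ) :=
  Diagram d lam ∪ {p : ℤ × ℤ | 1 ≤ p.1 ∧ p.1 ≤ (d : ℤ) ∧ p.2 = p.1 - ((d : ℤ) + 1)}

/-- The extended filling `B̃`, with `B̃(i, i - d - 1) = B(i, 0)`. -/
def ExtFilling (d : ℕ) (B : ℤ × ℤ → ℕ) : ℤ × ℤ → ℕ :=
  fun p => if p.2 = p.1 - ((d : ℤ) + 1) then B (p.1, 0) else B p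

/-- The rank function `rk(i,c)`. -/
def rk (d : ℕ) (lam : ℕ → ℕ) (i c : ℤ) : ℤ :=
  if 0 ≤ c then (lam i.toNat : ℤ) - d + i - c
  else (lam i.toNat : ℤ) - d + i + (lam ((d : ℤ) + 1 + c).toNat : ℤ) + c + 1

/-- A bijective filling of `D(λ)` with `1, …, |λ|` (normalized to be `0` off the diagram). -/
def IsFilling (d : ℕ) (lam : ℕ → ℕ) (B : ℤ × ℤ → ℕ) : Prop :=
  Set.BijOn B (Diagram d lam) (Set.Icc 1 (sizeP d lam)) ∧
    ∀ p : ℤ × ℤ, p ∉ Diagram d lam → B p = 0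

/-- A balanced shifted tableau: a bijective filling such that at each box `(i,c)`,
`B(i,c)` is the `rk(i,c)`-th largest entry of the multiset of values of `B̃` on the
extended hook, i.e. exactly `rk(i,c) - 1` boxes of the extended hook carry a value
strictly larger than `B(i,c)`. -/
def IsBalanced (d : ℕ) (lam : ℕ → ℕ) (B : ℤ × ℤ → ℕ) : Prop :=
  IsFilling d lam B ∧ ∀ p ∈ Diagram d lam,
    ({q ∈ ExtHook d lam p.1 p.2 | B p < ExtFilling d B q}.ncard : ℤ) =
      rk d lam p.1 p.2 - 1

/-- A standard Young tableau of shifted shape `λ`. -/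
def IsSYT (d : ℕ) (lam : ℕ → ℕ) (B : ℤ × ℤ → ℕ) : Prop :=
  IsFilling d lam B ∧ ∀ p ∈ Diagram d lam, ∀ q ∈ Diagram d lam,
    ((p.1 = q.1 ∧ p.2 < q.2) → B p < B q) ∧ ((p.2 = q.2 ∧ p.1 < q.1) → B p < B q)

/-- The simple reflections of `W(B_n)`, acting on `ℤ`: `s 0` swaps `1 ↔ -1`,
and `s a` (for `a ≥ 1`) swaps `a ↔ a+1` and `-a ↔ -(a+1)`. -/
def sB (a : ℕ) : Equiv.Perm ℤ :=
  if a = 0 then Equiv.swap 1 (-1)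
  else Equiv.swap (a : ℤ) ((a : ℤ) + 1) * Equiv.swap (-(a : ℤ)) (-(a : ℤ) - 1)

/-- The product `s_{a_1} s_{a_2} ⋯ s_{a_m}` of a word. -/
def wordProd (L : List ℕ) : Equiv.Perm ℤ := (L.map sB).prod

/-- A signed permutation in `W(B_n)`: odd, and the identity beyond `n`. -/
def IsSignedPerm (n : ℕ) (w : Equiv.Perm ℤ) : Prop :=
  (∀ i : ℤ, w (-i) = -(w i)) ∧ ∀ i : ℤ, (n : ℤ) < |i| → w i = i

/-- The Coxeter length of `w` in `W(B_n)`. -/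
noncomputable def lengthB (n : ℕ) (w : Equiv.Perm ℤ) : ℕ :=
  sInf {m : ℕ | ∃ L : List ℕ, (∀ a ∈ L, a < n) ∧ wordProd L = w ∧ L.length = m}

/-- `L` is a reduced word of `w` in `W(B_n)`. -/
def IsReducedWord (n : ℕ) (w : Equiv.Perm ℤ) (L : List ℕ) : Prop :=
  (∀ a ∈ L, a < n) ∧ wordProd L = w ∧ L.length = lengthB n w

/-- The vector `e_k` (for `k ≥ 1` the `k`-th standard basis vector, with the
conventions `e 0 = 0` and `e (-k) = - e k`), represented as an odd function `ℤ → ℤ`. -/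
def eVec (k : ℤ) : ℤ → ℤ :=
  fun t => if t = 0 then 0 else if t = k then 1 else if t = -k then -1 else 0

/-- The positive roots of type `B_n`. -/
def PosRoots (n : ℕ) : Set (ℤ → ℤ) :=
  {v | (∃ i j : ℤ, 1 ≤ i ∧ i < j ∧ j ≤ (n : ℤ) ∧
        (v = eVec j - eVec i ∨ v = eVec j + eVec i)) ∨
       (∃ i : ℤ, 1 ≤ i ∧ i ≤ (n : ℤ) ∧ v = eVec i)}

/-- The action of a signed permutation on vectors: `w · e_i = e_{w(i)}`. -/
def actB (w : Equiv.Perm ℤ) (v : ℤ → ℤ) : ℤ → ℤ := fun t => v (w⁻¹ t)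

/-- The inversion set `Inv(w) = {α ∈ Φ⁺ : w⁻¹ · α ∈ -Φ⁺}`. -/
def InvSet (n : ℕ) (w : Equiv.Perm ℤ) : Set (ℤ → ℤ) :=
  {α | α ∈ PosRoots n ∧ -(actB w⁻¹ α) ∈ PosRoots n}

/-- The simple roots: `α_0 = e_1` and `α_a = e_{a+1} - e_a` for `a ≥ 1`. -/
def alphaRoot (a : ℕ) : ℤ → ℤ :=
  if a = 0 then eVec 1 else eVec ((a : ℤ) + 1) - eVec (a : ℤ)

/-- The reflection order of a word: `reflOrder L t = γ_{t+1} = s_{a_1} ⋯ s_{a_t} · α_{a_{t+1}}`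
(0-indexed). -/
def reflOrder (L : List ℕ) (t : ℕ) : ℤ → ℤ :=
  actB (wordProd (L.take t)) (alphaRoot (L.getD t 0))

/-- The trapezoid `Z(d,r) = (r+2d-1, r+2d-3, …, r+1)`. -/
def Zlam (d r : ℕ) : ℕ → ℕ := fun i => r + 2 * d + 1 - 2 * i

/-- The labeling `f : D(Z(d,r)) → Φ⁺`. -/
def fLabel (d r : ℕ) (p : ℤ × ℤ) : ℤ → ℤ :=
  if p.2 ≤ 0 then eVec ((d : ℤ) + 1 - p.1) - eVec p.2
  else if p.2 ≤ (r : ℤ) then eVec ((d : ℤ) + 1 - p.1) + eVec (p.2 + (d : ℤ))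
  else eVec ((d : ℤ) + 1 - p.1) - eVec (p.2 - (r : ℤ))

/-- The extended labeling `f̃`, with `f̃(i, i - d - 1) = 2 e_{d+1-i}`. -/
def fExtLabel (d r : ℕ) (p : ℤ × ℤ) : ℤ → ℤ :=
  if p.2 = p.1 - ((d : ℤ) + 1) then (2 : ℤ) • eVec ((d : ℤ) + 1 - p.1)
  else fLabel d r p

/-- `w` is the signed permutation `w^{(d,r)} ∈ W(B_{d+r})`, i.e.
`w(i) = d + i` for `1 ≤ i ≤ r` and `w(i) = -(i - r)` for `r < i ≤ d + r`. -/
def IsWdr (d r : ℕ) (w : Equiv.Perm ℤ) : Prop :=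
  IsSignedPerm (d + r) w ∧
    (∀ i : ℤ, 1 ≤ i → i ≤ (r : ℤ) → w i = (d : ℤ) + i) ∧
    (∀ i : ℤ, (r : ℤ) < i → i ≤ (d : ℤ) + (r : ℤ) → w i = -(i - r))


/-- `x` lies strictly between `y` and `z` (i.e. `min(y,z) < x < max(y,z)`). -/
def Between (x y z : ℕ) : Prop := (y < x ∧ x < z) ∨ (z < x ∧ x < y)

/-- A nonempty list is unimodal: strictly decreasing down to its minimum
(at 0-indexed position `k`), then strictly increasing. -/
def Unimodal (L : List ℕ) : Prop :=
  ∃ k : ℕ, k < L.length ∧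
    (∀ a b : ℕ, a < b → b ≤ k → L.getD b 0 < L.getD a 0) ∧
    (∀ a b : ℕ, k ≤ a → a < b → b < L.length → L.getD a 0 < L.getD b 0)

/-- Row `i` of the distinguished tableau of shape `Z(d,r)`:
`(r+d-i, …, r+1, 0, 1, …, r+d-i)`. -/
def rowWord (d r i : ℕ) : List ℕ :=
  (List.range (r + 2 * (d - i) + 1)).map fun t =>
    if t < d - i then r + (d - i) - t else t - (d - i)

/-- The reading word `π(T) = T_d T_{d-1} ⋯ T_1` of the distinguished tableau of
shape `Z(d,r)`. -/
def piWord (d r : ℕ) : List ℕ :=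
  (List.range d).flatMap fun k => rowWord d r (d - k)

/-- `μ_i = Z(d,r)_i - λ_i`. -/
def muF (d r : ℕ) (lam : ℕ → ℕ) (i : ℕ) : ℕ := r + 2 * d + 1 - 2 * i - lam i

/-- `σ_i = μ_1 + ⋯ + μ_i`. -/
def sigmaF (d r : ℕ) (lam : ℕ → ℕ) (i : ℕ) : ℕ := ∑ t ∈ Finset.Icc 1 i, muF d r lam t

/-- `ν_i = min{μ_i, …, μ_d}`. -/
noncomputable def nuF (d r : ℕ) (lam : ℕ → ℕ) (i : ℕ) : ℕ :=
  sInf {m : ℕ | ∃ j : ℕ, i ≤ j ∧ j ≤ d ∧ m = muF d r lam j}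

/-- The word `a^λ`: the concatenation over `i = 1, …, d` of the increasing runs
`(d+r-i-μ_i+1, …, d+r-i)`. -/
def aLamWord (d r : ℕ) (lam : ℕ → ℕ) : List ℕ :=
  (List.range d).flatMap fun k =>
    (List.range (muF d r lam (k + 1))).map fun t =>
      d + r - (k + 1) - muF d r lam (k + 1) + 1 + t

/-- Row `i` of the tableau `P(w^λ)`: entries `P(i,c) = c` for `c ≥ 0` and
`P(i,c) = r - c - ν_{d+1+c}` for `c < 0`. -/
noncomputable def rowWordP (d r : ℕ) (lam : ℕ → ℕ) (i : ℕ) : List ℕ :=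
  (List.range (lam i)).map fun t =>
    if t < d - i then r + (d - i) - t - nuF d r lam (i + 1 + t) else t - (d - i)

/-- The reading word `π(P(w^λ))`. -/
noncomputable def piWordP (d r : ℕ) (lam : ℕ → ℕ) : List ℕ :=
  (List.range d).flatMap fun k => rowWordP d r lam (d - k)

/-- The shape obtained from `λ` by adding one box at the end of row `i`. -/
def stepShape (lam : ℕ → ℕ) (i : ℕ) : ℕ → ℕ :=
  fun t => if t = i then lam i + 1 else lam t

/-- The box-adding map `f_i` on fillings: swap columns `j = λ_i + i - d` and `j + 1`
(in rows `1, …, i-1`), and put the value `N + 1` in the new box `(i, j)`. -/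
def addBox (d : ℕ) (lam : ℕ → ℕ) (i : ℕ) (N : ℕ) (B : ℤ × ℤ → ℕ) : ℤ × ℤ → ℕ :=
  fun p =>
    if p = ((i : ℤ), (lam i : ℤ) + (i : ℤ) - (d : ℤ)) then N + 1
    else if 1 ≤ p.1 ∧ p.1 < (i : ℤ) ∧ p.2 = (lam i : ℤ) + (i : ℤ) - (d : ℤ) then
      B (p.1, p.2 + 1)
    else if 1 ≤ p.1 ∧ p.1 < (i : ℤ) ∧ p.2 = (lam i : ℤ) + (i : ℤ) - (d : ℤ) + 1 then
      B (p.1, p.2 - 1)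
    else B p

/-- Successively apply the box-adding maps along a list of row indices,
tracking the current shape. -/
def FmapAux (d : ℕ) : List ℕ → (ℕ → ℕ) → (ℤ × ℤ → ℕ) → (ℤ × ℤ → ℕ)
  | [], _, B => B
  | i :: rest, lam, B => FmapAux d rest (stepShape lam i) (addBox d lam i (sizeP d lam) B)

/-- The shape after successively adding boxes along a list of row indices. -/
def shapeAux : List ℕ → (ℕ → ℕ) → (ℕ → ℕ)
  | [], lam => lam
  | i :: rest, lam => shapeAux rest (stepShape lam i)

/-- The list of row indices `1^{μ_1} 2^{μ_2} ⋯ d^{μ_d}` used to pad `λ` to `Z(d,r)`. -/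
def rowsList (d r : ℕ) (lam : ℕ → ℕ) : List ℕ :=
  (List.range d).flatMap fun k => List.replicate (muF d r lam (k + 1)) (k + 1)

/-- `BS(Z(d,r))|_λ`: balanced tableaux of shape `Z(d,r)` such that for each
`i ∈ {1,…,d}` the entries `N + σ_{i-1} + 1, …, N + σ_i` all occur in row `i`. -/
def BSRestricted (d r : ℕ) (lam : ℕ → ℕ) : Set (ℤ × ℤ → ℕ) :=
  {T | IsBalanced d (Zlam d r) T ∧ ∀ i : ℕ, 1 ≤ i → i ≤ d →
    ∀ k : ℕ, sizeP d lam + sigmaF d r lam (i - 1) + 1 ≤ k →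
      k ≤ sizeP d lam + sigmaF d r lam i →
      ∃ c : ℤ, ((i : ℤ), c) ∈ Diagram d (Zlam d r) ∧ T ((i : ℤ), c) = k}

/-- `w ∈ W(B_n)` pattern embeds the signed pattern `v` (given as its one-line
notation, a list of nonzero integers). -/
def PatternEmbeds (n : ℕ) (w : Equiv.Perm ℤ) (v : List ℤ) : Prop :=
  ∃ idx : Fin v.length → ℤ, StrictMono idx ∧
    (∀ j, 1 ≤ idx j ∧ idx j ≤ (n : ℤ)) ∧
    (∀ j, 0 < w (idx j) ↔ 0 < v.get j) ∧
    (∀ j k, |w (idx j)| < |w (idx k)| ↔ |v.get j| < |v.get k|)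



lemma sB_zero_apply (z : ℤ) : sB 0 z = if z = 1 then -1 else if z = -1 then 1 else z := by
  unfold sB
  simp only [if_true, Equiv.swap_apply_def]

lemma sB_pos_apply (k : ℕ) (hk : 0 < k) (z : ℤ) : sB k z =
    if z = k then (k:ℤ)+1 else if z = k+1 then (k:ℤ) else if z = -k then -(k:ℤ)-1
    else if z = -k-1 then -(k:ℤ) else z := by
  unfold sB
  rw [if_neg (by omega)]
  simp only [Equiv.Perm.mul_apply, Equiv.swap_apply_def]
  split_ifs <;> omega

lemma sB_odd (k : ℕ) (z : ℤ) : sB k (-z) = - sB k z := by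
  rcases Nat.eq_zero_or_pos k with rfl | hk
  · rw [sB_zero_apply, sB_zero_apply]; split_ifs <;> omega
  · rw [sB_pos_apply k hk, sB_pos_apply k hk]; split_ifs <;> omega

lemma sB_mul_self (k : ℕ) : sB k * sB k = 1 := by
  ext z
  rw [Equiv.Perm.mul_apply, Equiv.Perm.one_apply]
  rcases Nat.eq_zero_or_pos k with rfl | hk
  · simp only [sB_zero_apply]; grind
  · simp only [sB_pos_apply k hk]; grind

def OddP (u : Equiv.Perm ℤ) : Prop := ∀ z, u (-z) = - u z

lemma OddP.inv {u : Equiv.Perm ℤ} (h : OddP u) : OddP u⁻¹ := by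
  intro z
  apply u.injective
  rw [h]
  simp

lemma OddP.zero {u : Equiv.Perm ℤ} (h : OddP u) : u 0 = 0 := by
  have := h 0
  simp only [neg_zero] at this
  omega

lemma wordProd_append (A C : List ℕ) : wordProd (A ++ C) = wordProd A * wordProd C := by
  simp [wordProd]

lemma wordProd_cons (k : ℕ) (C : List ℕ) : wordProd (k :: C) = sB k * wordProd C := by
  simp [wordProd]

lemma wordProd_odd (L : List ℕ) : OddP (wordProd L) := by
  induction L with
  | nil => intro z; simp [wordProd]
  | cons k C ih =>
    intro z
    rw [wordProd_cons, Equiv.Perm.mul_apply, Equiv.Perm.mul_apply, ih, sB_odd]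

/-- signed reflection attached to a pair -/
def Rfl (a b : ℤ) : Equiv.Perm ℤ :=
  if a + b = 0 then Equiv.swap a b else if a = 0 then Equiv.swap b (-b)
  else if b = 0 then Equiv.swap a (-a) else Equiv.swap a b * Equiv.swap (-a) (-b)

lemma Rfl_conj {u : Equiv.Perm ℤ} (h : OddP u) (p q : ℤ) :
    Rfl (u p) (u q) = u * Rfl p q * u⁻¹ := by
  have h0 := h.zero
  have e1 : u p + u q = 0 ↔ p + q = 0 := by
    constructor
    · intro e
      have : u p = u (-q) := by rw [h]; omega
      have := u.injective this
      omega
    · intro e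
      have : p = -q := by omega
      rw [this, h]; omega
  have e2 : ∀ z, u z = 0 ↔ z = 0 := by
    intro z
    constructor
    · intro e; apply u.injective; rw [e, h0]
    · rintro rfl; exact h0
  unfold Rfl
  simp only [e1, e2]
  split_ifs
  · rw [Equiv.swap_apply_apply]
  · rw [← h, Equiv.swap_apply_apply]
  · rw [← h, Equiv.swap_apply_apply]
  · rw [← h, ← h, Equiv.swap_apply_apply, Equiv.swap_apply_apply]; group

lemma sB_flip (k : ℕ) (p q : ℤ) (hne : p ≠ q) (hf : ¬ (p < q ↔ sB k p < sB k q)) :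
    sB k = Rfl p q := by
  ext z
  rcases Nat.eq_zero_or_pos k with rfl | hk
  · rw [sB_zero_apply, sB_zero_apply] at hf
    have : -1 ≤ p ∧ p ≤ 1 ∧ -1 ≤ q ∧ q ≤ 1 := by
      split_ifs at hf <;> omega
    obtain ⟨h1, h2, h3, h4⟩ := this
    rw [sB_zero_apply]
    unfold Rfl
    interval_cases p <;> interval_cases q <;>
      simp [Equiv.swap_apply_def] at hne ⊢ <;> split_ifs <;> omega
  · rw [sB_pos_apply k hk, sB_pos_apply k hk] at hf
    have : (p = k ∧ q = k+1) ∨ (q = k ∧ p = k+1) ∨ (p = -k ∧ q = -k-1) ∨ (q = -k ∧ p = -k-1) := by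
      split_ifs at hf <;> omega
    clear hf
    have hR : Rfl p q = Equiv.swap p q * Equiv.swap (-p) (-q) := by
      unfold Rfl
      rw [if_neg (by omega), if_neg (by omega), if_neg (by omega)]
    rw [sB_pos_apply k hk, hR]
    rcases this with ⟨rfl, rfl⟩ | ⟨rfl, rfl⟩ | ⟨rfl, rfl⟩ | ⟨rfl, rfl⟩ <;>
    · simp only [Equiv.Perm.mul_apply, Equiv.swap_apply_def]
      split_ifs <;> omega

/-- the pair `(a,b)` is inverted at time `t` -/
def Inv (L : List ℕ) (t : ℕ) (a b : ℤ) : Prop :=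
  (wordProd (L.take t))⁻¹ a < (wordProd (L.take t))⁻¹ b

lemma take_succ_prod (L : List ℕ) (t : ℕ) (ht : t < L.length) :
    (wordProd (L.take (t+1))) = wordProd (L.take t) * sB (L[t]) := by
  rw [List.take_succ_eq_append_getElem ht, wordProd_append]
  simp [wordProd]

lemma sB_inv (k : ℕ) : (sB k)⁻¹ = sB k := inv_eq_of_mul_eq_one_left (sB_mul_self k)

lemma inv_succ (L : List ℕ) (t : ℕ) (ht : t < L.length) (a : ℤ) :
    (wordProd (L.take (t+1)))⁻¹ a = sB (L[t]) ((wordProd (L.take t))⁻¹ a) := by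
  rw [take_succ_prod L t ht, mul_inv_rev, sB_inv, Equiv.Perm.mul_apply]

lemma flip_refl (L : List ℕ) (t : ℕ) (ht : t < L.length) (a b : ℤ) (hab : a ≠ b)
    (hf : ¬ (Inv L t a b ↔ Inv L (t+1) a b)) :
    wordProd (L.take t) * sB (L[t]) * (wordProd (L.take t))⁻¹ = Rfl a b := by
  unfold Inv at hf
  rw [inv_succ L t ht, inv_succ L t ht] at hf
  have := sB_flip (L[t]) _ _ (fun e => hab ((wordProd (L.take t))⁻¹.injective e)) hf
  rw [this, ← Rfl_conj (wordProd_odd _)]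
  simp

lemma flip_once (n : ℕ) (w : Equiv.Perm ℤ) (L : List ℕ) (hL : IsReducedWord n w L)
    (s t : ℕ) (hst : s < t) (ht : t < L.length) (a b : ℤ) (hab : a ≠ b)
    (h1 : ¬ (Inv L s a b ↔ Inv L (s+1) a b)) (h2 : ¬ (Inv L t a b ↔ Inv L (t+1) a b)) :
    False := by
  obtain ⟨hlt, hp, hlen⟩ := hL
  have r1 := flip_refl L s (by omega) a b hab h1
  have r2 := flip_refl L t ht a b hab h2
  rw [← r2] at r1
  have c1 : L.drop (s+1) = (L.drop (s+1)).take (t - (s+1)) ++ L.drop t := by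
    have := (List.take_append_drop (t-(s+1)) (L.drop (s+1))).symm
    rwa [List.drop_drop, show s + 1 + (t - (s+1)) = t by omega] at this
  set M := (L.drop (s+1)).take (t - (s+1)) with hM
  have c2 : L.take t = L.take s ++ (L[s] :: M) := by
    have e : L = (L.take s ++ (L[s] :: M)) ++ L.drop t := by
      conv_lhs => rw [← List.take_append_drop s L, List.drop_eq_getElem_cons (by omega), c1]
      simp
    have hl : (L.take s ++ (L[s] :: M)).length = t := by
      simp [hM]; omega
    conv_lhs => rw [e]
    rw [List.take_left' hl]
  have c3 : L = L.take t ++ (L[t] :: L.drop (t+1)) := by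
    rw [← List.drop_eq_getElem_cons ht, List.take_append_drop]
  have key : wordProd (L.take t) * sB (L[t]) = wordProd (L.take s) * wordProd M := by
    have : wordProd (L.take t) * sB (L[t]) =
      (wordProd (L.take s) * sB L[s] * (wordProd (L.take s))⁻¹) * wordProd (L.take t) := by
      rw [r1]; group
    rw [this]
    rw [c2, wordProd_append, wordProd_cons]
    have := sB_mul_self (L[s])
    calc _ = wordProd (L.take s) * (sB L[s] * sB L[s]) * wordProd M := by group
      _ = _ := by rw [this]; group
  have hnew : wordProd (L.take s ++ M ++ L.drop (t+1)) = w := by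
    rw [← hp]
    conv_rhs => rw [c3]
    rw [wordProd_append, wordProd_append, wordProd_append, wordProd_cons, ← mul_assoc, key]
  have hle : lengthB n w ≤ (L.take s ++ M ++ L.drop (t+1)).length := by
    apply Nat.sInf_le
    refine ⟨_, ?_, hnew, rfl⟩
    intro x hx
    apply hlt
    simp only [List.mem_append, hM] at hx
    rcases hx with (hx | hx) | hx
    · exact List.mem_of_mem_take hx
    · exact List.mem_of_mem_drop (List.mem_of_mem_take hx)
    · exact List.mem_of_mem_drop hx
  rw [← hlen] at hle
  simp [hM] at hle
  omega

lemma exists_flip (f : ℕ → Prop) (s t : ℕ) (hst : s ≤ t) (h : ¬ (f s ↔ f t)) :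
    ∃ i, s ≤ i ∧ i < t ∧ ¬ (f i ↔ f (i+1)) := by
  by_contra hc
  push Not at hc
  apply h
  induction t, hst using Nat.le_induction with
  | base => rfl
  | succ t hst ih =>
    have h1 : f s ↔ f t := by
      by_contra h'
      exact h' (ih h' (fun i hi hit => hc i hi (by omega)))
    exact h1.trans (hc t hst (by omega))

lemma inv_mono (n : ℕ) (w : Equiv.Perm ℤ) (L : List ℕ) (hL : IsReducedWord n w L)
    (s t : ℕ) (hst : s ≤ t) (ht : t ≤ L.length) (a b : ℤ) (hab : b < a)
    (h : Inv L s a b) : Inv L t a b := by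
  by_contra hn
  have h0 : ¬ Inv L 0 a b := by
    simp [Inv, wordProd]; omega
  obtain ⟨i, _, hi, fi⟩ := exists_flip (fun t => Inv L t a b) 0 s (by omega) (by tauto)
  obtain ⟨j, hj, hj', fj⟩ := exists_flip (fun t => Inv L t a b) s t hst (by tauto)
  exact flip_once n w L hL i j (by omega) (by omega) a b (by omega) fi fj

lemma inv_symm (L : List ℕ) (t : ℕ) (a b : ℤ) : Inv L t a b ↔ Inv L t (-b) (-a) := by
  unfold Inv
  rw [(wordProd_odd _).inv, (wordProd_odd _).inv]
  omega

lemma inv_ext (L : List ℕ) (t : ℕ) (a : ℤ) : Inv L t a (-a) ↔ Inv L t a 0 := by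
  unfold Inv
  rw [(wordProd_odd _).inv, (wordProd_odd _).inv.zero]
  omega

lemma eVec_neg (k : ℤ) : eVec (-k) = - eVec k := by
  funext t
  simp only [eVec, Pi.neg_apply]
  split_ifs <;> omega

lemma eVec_inj (p q x b : ℤ) (h1 : p ≠ q) (h2 : p ≠ -q) (h3 : p ≠ 0)
    (h4 : x ≠ b) (h5 : x ≠ -b) (h6 : x ≠ 0) (h : eVec p - eVec q = eVec x - eVec b) :
    (p = x ∧ q = b) ∨ (p = -b ∧ q = -x) := by
  have e1 := congrFun h p
  have e2 := congrFun h q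
  have e3 := congrFun h x
  have e4 := congrFun h b
  simp only [eVec, Pi.sub_apply] at e1 e2 e3 e4
  grind

lemma actB_eVec {u : Equiv.Perm ℤ} (h : OddP u) (k : ℤ) : actB u (eVec k) = eVec (u k) := by
  funext t
  have h0 : u⁻¹ t = 0 ↔ t = 0 := by
    rw [Equiv.Perm.inv_eq_iff_eq, h.zero]
  have h1 : u⁻¹ t = k ↔ t = u k := by
    rw [Equiv.Perm.inv_eq_iff_eq]
  have h2 : u⁻¹ t = -k ↔ t = -u k := by
    rw [Equiv.Perm.inv_eq_iff_eq, h]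
  simp only [actB, eVec, h0, h1, h2]

lemma alphaRoot_eq (k : ℕ) : alphaRoot k = eVec ((k:ℤ)+1) - eVec k := by
  unfold alphaRoot
  split_ifs with h
  · subst h
    funext t
    simp only [eVec, Pi.sub_apply]
    grind
  · rfl

lemma reflOrder_eq (L : List ℕ) (t : ℕ) : reflOrder L t =
    eVec (wordProd (L.take t) ((L.getD t 0 : ℕ) + 1)) - eVec (wordProd (L.take t) (L.getD t 0 : ℕ)) := by
  rw [← actB_eVec (wordProd_odd _), ← actB_eVec (wordProd_odd _), reflOrder, alphaRoot_eq]
  rfl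

/-- second index of the pair attached to a column -/
def bcol (d r : ℕ) (c : ℤ) : ℤ := if c ≤ 0 then c else if c ≤ r then -(c+d) else c - r

lemma fLabel_eq (d r : ℕ) (p : ℤ × ℤ) :
    fLabel d r p = eVec ((d:ℤ)+1-p.1) - eVec (bcol d r p.2) := by
  unfold fLabel bcol
  split_ifs
  · rfl
  · rw [eVec_neg, sub_neg_eq_add]
  · rfl

lemma mem_diag (d r : ℕ) (i c : ℤ) : (i, c) ∈ Diagram d (Zlam d r) ↔
    1 ≤ i ∧ i ≤ d ∧ i - d ≤ c ∧ c + i ≤ r + d := by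
  simp only [Diagram, Zlam, Set.mem_ofPred_eq]
  constructor
  · rintro ⟨h1, h2, h3, h4⟩
    refine ⟨h1, h2, h3, ?_⟩
    omega
  · rintro ⟨h1, h2, h3, h4⟩
    refine ⟨h1, h2, h3, ?_⟩
    omega

lemma eVec_step (L : List ℕ) (t : ℕ) (x b : ℤ) (hx : x ≠ 0) (h1 : x ≠ b) (h2 : x ≠ -b)
    (h : reflOrder L t = eVec x - eVec b) :
    (wordProd (L.take t) ((L.getD t 0 : ℕ) + 1) = x ∧ wordProd (L.take t) (L.getD t 0 : ℕ) = b) ∨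
    (wordProd (L.take t) ((L.getD t 0 : ℕ) + 1) = -b ∧ wordProd (L.take t) (L.getD t 0 : ℕ) = -x) := by
  rw [reflOrder_eq] at h
  have o := wordProd_odd (L.take t)
  refine eVec_inj _ _ _ _ ?_ ?_ ?_ h1 h2 hx h
  · intro e
    have := (wordProd (L.take t)).injective e
    omega
  · intro e
    rw [← o] at e
    have := (wordProd (L.take t)).injective e
    omega
  · intro e
    rw [← o.zero] at e
    have := (wordProd (L.take t)).injective e
    omega

lemma diag_pair (d r : ℕ) (i c : ℤ) (h : (i, c) ∈ Diagram d (Zlam d r)) :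
    bcol d r c < (d:ℤ) + 1 - i ∧ (d:ℤ)+1-i ≠ - bcol d r c ∧ (d:ℤ)+1-i ≠ 0 := by
  rw [mem_diag] at h
  unfold bcol
  split_ifs <;> omega

lemma main_time (d r : ℕ) (hd : 1 ≤ d)
    (w : Equiv.Perm ℤ) (hw : IsWdr d r w)
    (L : List ℕ) (hL : IsReducedWord (d + r) w L)
    (B : ℤ × ℤ → ℕ)
    (hB : ∀ p ∈ Diagram d (Zlam d r),
      1 ≤ B p ∧ B p ≤ sizeP d (Zlam d r) ∧ reflOrder L (B p - 1) = fLabel d r p)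
    (i c : ℤ) (hp : (i, c) ∈ Diagram d (Zlam d r)) :
    B (i,c) ≤ L.length ∧ 1 ≤ B (i,c) ∧
    ∀ t ≤ L.length, (Inv L t ((d:ℤ)+1-i) (bcol d r c) ↔ B (i,c) ≤ t) := by
  obtain ⟨b1, -, b2⟩ := hB _ hp
  obtain ⟨g1, g2, g3⟩ := diag_pair d r i c hp
  rw [fLabel_eq] at b2
  simp only at b2
  have st := eVec_step L _ _ _ g3 (by omega) g2 b2
  have hlt : B (i,c) - 1 < L.length := by
    by_contra hge
    rw [List.take_of_length_le (by omega), List.getD_eq_default _ _ (by omega), hL.2.1] at st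
    obtain ⟨⟨wo, -⟩, w1, w2⟩ := hw
    have w0 : w 0 = 0 := OddP.zero wo
    rw [mem_diag] at hp
    simp only [Nat.cast_zero, zero_add, w0] at st
    rcases Nat.eq_zero_or_pos r with rfl | hr
    · have := w2 1 (by simp) (by omega)
      omega
    · have := w1 1 (by simp) (by omega)
      omega
  refine ⟨by omega, b1, ?_⟩
  obtain ⟨t, ht⟩ : ∃ t, B (i,c) = t + 1 := ⟨B (i,c) - 1, by omega⟩
  rw [ht] at st hlt ⊢
  simp only [Nat.add_sub_cancel] at st hlt
  set x := (d:ℤ)+1-i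
  set b := bcol d r c
  rw [List.getD_eq_getElem _ _ hlt] at st
  have o := (wordProd_odd (L.take t)).inv
  have st' : ((wordProd (L.take t))⁻¹ x = (L[t] : ℤ) + 1 ∧ (wordProd (L.take t))⁻¹ b = L[t]) ∨
     ((wordProd (L.take t))⁻¹ b = -((L[t] : ℤ) + 1) ∧ (wordProd (L.take t))⁻¹ x = -L[t]) := by
    rcases st with ⟨h1, h2⟩ | ⟨h1, h2⟩
    · left
      rw [← h1, ← h2]; simp
    · right
      have h1' : b = - wordProd (L.take t) ((L[t] : ℤ) + 1) := by omega
      have h2' : x = - wordProd (L.take t) (L[t] : ℤ) := by omega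
      rw [h1', h2', o, o]; simp
  have hn : ¬ Inv L t x b := by
    unfold Inv; omega
  have hy : Inv L (t+1) x b := by
    unfold Inv
    rw [inv_succ L t hlt, inv_succ L t hlt]
    generalize L[t] = k at st'
    rcases Nat.eq_zero_or_pos k with rfl | hk
    · rw [sB_zero_apply, sB_zero_apply]; split_ifs <;> omega
    · rw [sB_pos_apply k hk, sB_pos_apply k hk]; split_ifs <;> omega
  intro s hs
  constructor
  · intro h
    by_contra hc
    exact hn (inv_mono _ w L hL s t (by omega) (by omega) x b g1 h)
  · intro h
    exact inv_mono _ w L hL (t+1) s (by omega) hs x b g1 hy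

lemma B_inj (d r : ℕ) (L : List ℕ)
    (B : ℤ × ℤ → ℕ)
    (hB : ∀ p ∈ Diagram d (Zlam d r),
      1 ≤ B p ∧ B p ≤ sizeP d (Zlam d r) ∧ reflOrder L (B p - 1) = fLabel d r p) :
    Set.InjOn B (Diagram d (Zlam d r)) := by
  rintro ⟨i, c⟩ h ⟨i', c'⟩ h' e
  have b1 := (hB _ h).2.2
  have b2 := (hB _ h').2.2
  rw [e, b2, fLabel_eq, fLabel_eq] at b1
  obtain ⟨g1, g2, g3⟩ := diag_pair d r i c h
  obtain ⟨g1', g2', g3'⟩ := diag_pair d r i' c' h'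
  have := eVec_inj _ _ _ _ (by omega) g2' g3' (by omega) g2 g3 b1
  rw [mem_diag] at h h'
  unfold bcol at this
  rw [Prod.mk.injEq]
  split_ifs at this <;> omega

lemma diag_ncard (d r : ℕ) : (Diagram d (Zlam d r)).Finite ∧
    (Diagram d (Zlam d r)).ncard = sizeP d (Zlam d r) := by
  classical
  let F : Finset (Σ _ : ℕ, ℕ) := (Finset.Icc 1 d).sigma (fun i => Finset.range (Zlam d r i))
  let g : (Σ _ : ℕ, ℕ) → ℤ × ℤ := fun s => ((s.1 : ℤ), (s.2 : ℤ) + s.1 - d)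
  have hD : Diagram d (Zlam d r) = ((F.image g : Finset (ℤ × ℤ)) : Set (ℤ × ℤ)) := by
    ext ⟨i, c⟩
    rw [mem_diag]
    simp only [F, g, Finset.coe_image, Set.mem_image, Finset.mem_coe, Finset.mem_sigma,
      Finset.mem_Icc, Finset.mem_range, Zlam, Prod.mk.injEq]
    constructor
    · rintro ⟨h1, h2, h3, h4⟩
      refine ⟨⟨i.toNat, (c - i + d).toNat⟩, ⟨⟨by simp only; omega, by simp only; omega⟩, by simp only; omega⟩, by simp only; omega, by simp only; omega⟩
    · rintro ⟨⟨a, b⟩, ⟨⟨h1, h2⟩, h3⟩, h4, h5⟩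
      simp only at *
      omega
  rw [hD]
  refine ⟨Finset.finite_toSet _, ?_⟩
  rw [Set.ncard_coe_finset, Finset.card_image_of_injective, Finset.card_sigma]
  · simp [sizeP]
  · rintro ⟨a, b⟩ ⟨a', b'⟩ h
    simp only [g, Prod.mk.injEq] at h
    obtain ⟨h1, h2⟩ := h
    have : a = a' := by omega
    subst this
    have : b = b' := by omega
    subst this
    rfl


lemma mem_ext (d r : ℕ) (i c i' c' : ℤ) : (i', c') ∈ ExtHook d (Zlam d r) i c ↔
    (i' = i ∧ c' = c) ∨
    ((1 ≤ i' ∧ i' ≤ d ∧ i' - d ≤ c' ∧ c' + i' ≤ r + d) ∧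
      ((i' = i ∧ c < c') ∨ (c' = c ∧ i < i') ∨ (c < 0 ∧ i' = d + 1 + c))) ∨
    (c < 0 ∧ i' = d + 1 + c ∧ c' = c) := by
  rw [← mem_diag]
  unfold ExtHook Hook
  simp only [Set.mem_union, Set.mem_singleton_iff, Set.mem_ofPred_eq, Prod.mk.injEq]
  tauto

lemma ncard_Ioc (a b : ℤ) (h : a ≤ b) : ((Set.Ioc a b).ncard : ℤ) = b - a := by
  rw [← Finset.coe_Ioc, Set.ncard_coe_finset, Int.card_Ioc]
  omega

lemma count_nonneg (d r : ℕ) (i c : ℤ) (G : ℤ → ℤ → Prop)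
    (hp : 1 ≤ i ∧ i ≤ d ∧ i - d ≤ c ∧ c + i ≤ r + d) (hc : 0 ≤ c)
    (self : ¬ G i c)
    (S1 : ∀ c', c < c' → 1 ≤ c' → c' ≤ r → G i c')
    (P1 : ∀ k, 1 ≤ k → c - r < k → k < d + 1 - i → (G i (r + k) ↔ ¬ G (d + 1 - k) c)) :
    ({q ∈ ExtHook d (Zlam d r) i c | G q.1 q.2}.ncard : ℤ) = r + d - i - c := by
  classical
  let g : ℤ → ℤ × ℤ := fun c' => if G i c' then (i, c') else (d + 1 + r - c', c)
  have hbij : {q ∈ ExtHook d (Zlam d r) i c | G q.1 q.2} = g '' (Set.Ioc c (r + d - i)) := by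
    ext ⟨i', c'⟩
    simp only [Set.mem_ofPred_eq, Set.mem_image, Set.mem_Ioc, mem_ext]
    constructor
    · rintro ⟨h, hG⟩
      by_cases hi : i' = i
      · subst hi
        have : c' ≠ c := by rintro rfl; exact self hG
        refine ⟨c', by omega, ?_⟩
        simp only [g, if_pos hG]
      · have e : c' = c := by omega
        subst e
        have hP := P1 (d + 1 - i') (by omega) (by omega) (by omega)
        rw [show (d:ℤ) + 1 - (d + 1 - i') = i' by ring] at hP
        refine ⟨r + (d + 1 - i'), by omega, ?_⟩
        simp only [g]
        rw [if_neg (by tauto)]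
        rw [Prod.mk.injEq]; constructor <;> omega
    · rintro ⟨k, hk, e⟩
      simp only [g] at e
      split_ifs at e with hG <;> simp only [Prod.mk.injEq] at e <;> obtain ⟨rfl, rfl⟩ := e
      · exact ⟨by omega, hG⟩
      · have : (r:ℤ) < k := by
          by_contra h'
          exact hG (S1 k (by omega) (by omega) (by omega))
        have hP := P1 (k - r) (by omega) (by omega) (by omega)
        rw [show (r:ℤ) + (k - r) = k by ring, show (d:ℤ) + 1 - (k - r) = d + 1 + r - k by ring] at hP
        exact ⟨by omega, by tauto⟩
  rw [hbij, Set.InjOn.ncard_image, ncard_Ioc _ _ (by omega)]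
  intro a ha b hb e
  simp only [Set.mem_Ioc] at ha hb
  simp only [g] at e
  split_ifs at e with h1 h2 h2 <;> simp only [Prod.mk.injEq] at e <;> omega

lemma count_neg (d r : ℕ) (i c : ℤ) (G : ℤ → ℤ → Prop)
    (hp : 1 ≤ i ∧ i ≤ d ∧ i - d ≤ c ∧ c + i ≤ r + d) (hc : c < 0)
    (self : ¬ G i c)
    (S1 : ∀ c', c < c' → 1 ≤ c' → c' ≤ r → G i c')
    (S2 : ∀ k : ℤ, 1 ≤ k → k ≤ r → G (d + 1 + c) k)
    (P1 : ∀ k, - c < k → k < d + 1 - i → (G i (r + k) ↔ ¬ G (d + 1 - k) c))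
    (P2 : ∀ c', c < c' → c' < 0 → (G i c' ↔ ¬ G (d + 1 + c) (r - c')))
    (P20 : G i 0 ↔ ¬ G (d + 1 + c) 0)
    (P3 : ∀ k, 1 ≤ k → k ≤ -c → (G i (r + k) ↔ ¬ G (d + 1 + c) (-k))) :
    ({q ∈ ExtHook d (Zlam d r) i c | G q.1 q.2}.ncard : ℤ) = 2 * r + d - i - c := by
  classical
  let g : ℤ → ℤ × ℤ := fun c' =>
    if r + d - i < c' then (d + 1 + c, c' - (r + d - i)) else
    if G i c' then (i, c') else
    if c' < 0 then (d + 1 + c, r - c') else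
    if c' = 0 then (d + 1 + c, 0) else
    if c' ≤ r - c then (d + 1 + c, r - c') else (d + 1 + r - c', c)
  have hbij : {q ∈ ExtHook d (Zlam d r) i c | G q.1 q.2} = g '' (Set.Ioc c (2 * r + d - i)) := by
    ext ⟨i', c'⟩
    simp only [Set.mem_ofPred_eq, Set.mem_image, Set.mem_Ioc, mem_ext]
    constructor
    · rintro ⟨h, hG⟩
      by_cases hi : i' = i
      · subst hi
        have : c' ≠ c := by rintro rfl; exact self hG
        refine ⟨c', by omega, ?_⟩
        simp only [g]
        rw [if_neg (by omega), if_pos hG]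
      by_cases hy : i' = d + 1 + c
      · subst hy
        rcases lt_trichotomy c' 0 with h0 | h0 | h0
        · have hP := P3 (-c') (by omega) (by omega)
          rw [neg_neg] at hP
          refine ⟨r + (-c'), by omega, ?_⟩
          simp only [g]
          rw [if_neg (by omega), if_neg (by tauto), if_neg (by omega), if_neg (by omega),
            if_pos (by omega)]
          rw [Prod.mk.injEq]; constructor <;> omega
        · subst h0
          refine ⟨0, by omega, ?_⟩
          simp only [g]
          rw [if_neg (by omega), if_neg (by tauto), if_neg (by omega), if_pos trivial]
        · by_cases hr : c' ≤ r
          · refine ⟨c' + (r + d - i), by omega, ?_⟩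
            simp only [g]
            rw [if_pos (by omega)]
            rw [Prod.mk.injEq]; constructor <;> omega
          · have hP := P2 (r - c') (by omega) (by omega)
            rw [show (r:ℤ) - (r - c') = c' by ring] at hP
            refine ⟨r - c', by omega, ?_⟩
            simp only [g]
            rw [if_neg (by omega), if_neg (by tauto), if_pos (by omega)]
            rw [Prod.mk.injEq]; constructor <;> omega
      · have e : c' = c := by omega
        subst e
        have hP := P1 (d + 1 - i') (by omega) (by omega)
        rw [show (d:ℤ) + 1 - (d + 1 - i') = i' by ring] at hP
        refine ⟨r + (d + 1 - i'), by omega, ?_⟩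
        simp only [g]
        rw [if_neg (by omega), if_neg (by tauto), if_neg (by omega), if_neg (by omega),
            if_neg (by omega)]
        rw [Prod.mk.injEq]; constructor <;> omega
    · rintro ⟨k, hk, e⟩
      simp only [g] at e
      split_ifs at e with h1 hG h2 h3 h4 <;> simp only [Prod.mk.injEq] at e <;>
        obtain ⟨rfl, rfl⟩ := e
      · exact ⟨by omega, S2 _ (by omega) (by omega)⟩
      · exact ⟨by omega, hG⟩
      · have hP := P2 k (by omega) (by omega)
        exact ⟨by omega, by tauto⟩
      · subst h3
        exact ⟨by omega, by tauto⟩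
      · have : (r:ℤ) < k := by
          by_contra h'
          exact hG (S1 k (by omega) (by omega) (by omega))
        have hP := P3 (k - r) (by omega) (by omega)
        rw [show (r:ℤ) + (k - r) = k by ring, show -(k - r) = r - k by ring] at hP
        exact ⟨by omega, by tauto⟩
      · have hP := P1 (k - r) (by omega) (by omega)
        rw [show (r:ℤ) + (k - r) = k by ring, show (d:ℤ) + 1 - (k - r) = d + 1 + r - k by ring] at hP
        exact ⟨by omega, by tauto⟩
  rw [hbij, Set.InjOn.ncard_image, ncard_Ioc _ _ (by omega)]
  intro a ha b hb e
  simp only [Set.mem_Ioc] at ha hb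
  have S1a := S1 a ha.1
  have S1b := S1 b hb.1
  have ha' : 1 ≤ a ∧ a ≤ r → G i a := fun h => S1 a ha.1 h.1 h.2
  have hb' : 1 ≤ b ∧ b ≤ r → G i b := fun h => S1 b hb.1 h.1 h.2
  simp only [g] at e
  by_cases g1 : G i a <;> by_cases g2 : G i b <;> simp only [g1, g2, if_true, if_false, imp_false, imp_true_iff] at e ha' hb' <;>
  split_ifs at e <;> simp only [Prod.mk.injEq] at e <;> omega

/-- the filling of `D(Z(d,r))` obtained from the reflection order of a
reduced word of `w^{(d,r)}` (via `γ_{B(x)} = f(x)`) is a balanced shifted tableau. -/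
theorem reduced_word_gives_balanced (d r : ℕ) (hd : 1 ≤ d)
    (w : Equiv.Perm ℤ) (hw : IsWdr d r w)
    (L : List ℕ) (hL : IsReducedWord (d + r) w L)
    (B : ℤ × ℤ → ℕ)
    (hB0 : ∀ p : ℤ × ℤ, p ∉ Diagram d (Zlam d r) → B p = 0)
    (hB : ∀ p ∈ Diagram d (Zlam d r),
      1 ≤ B p ∧ B p ≤ sizeP d (Zlam d r) ∧ reflOrder L (B p - 1) = fLabel d r p) :
    IsBalanced d (Zlam d r) B := by
  obtain ⟨hfin, hcard⟩ := diag_ncard d r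
  have hinj := B_inj d r L B hB
  have T := main_time d r hd w hw L hL B hB
  have hmaps : Set.MapsTo B (Diagram d (Zlam d r)) (Set.Icc 1 (sizeP d (Zlam d r))) :=
    fun p hp => ⟨(hB p hp).1, (hB p hp).2.1⟩
  refine ⟨⟨⟨hmaps, hinj, ?_⟩, hB0⟩, ?_⟩
  · have : B '' (Diagram d (Zlam d r)) = Set.Icc 1 (sizeP d (Zlam d r)) := by
      apply Set.eq_of_subset_of_ncard_le (Set.image_subset_iff.mpr hmaps)
      · rw [hinj.ncard_image, hcard, ← Finset.coe_Icc, Set.ncard_coe_finset]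
        simp
    rw [Set.SurjOn, this]
  obtain ⟨⟨wo, -⟩, w1, w2⟩ := hw
  have wi1 : ∀ k : ℤ, 1 ≤ k → k ≤ r → w⁻¹ (d + k) = k := by
    intro k h1 h2
    rw [Equiv.Perm.inv_eq_iff_eq, w1 k h1 h2]
  have woi : ∀ z, w⁻¹ (-z) = - w⁻¹ z := OddP.inv wo
  have wi0 : w⁻¹ 0 = 0 := OddP.zero woi
  have wi2 : ∀ k : ℤ, 1 ≤ k → k ≤ d → w⁻¹ k = -(r + k) := by
    intro k h1 h2
    rw [Equiv.Perm.inv_eq_iff_eq, wo, w2 (r + k) (by omega) (by omega)]; omega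
  have never : ∀ a b : ℤ, b < a → ¬ (w⁻¹ a < w⁻¹ b) → ∀ t ≤ L.length, ¬ Inv L t a b := by
    intro a b hab hn t ht hI
    have := inv_mono _ w L hL t L.length ht le_rfl a b hab hI
    unfold Inv at this
    rw [List.take_length, hL.2.1] at this
    exact hn this
  rintro ⟨i, c⟩ hp
  obtain ⟨Tl, T1, Tp⟩ := T i c hp
  obtain ⟨g1, g2, g3⟩ := diag_pair d r i c hp
  have hp' := (mem_diag d r i c).1 hp
  have vdef : ∀ i' c' : ℤ, (i', c') ∈ Diagram d (Zlam d r) →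
      ExtFilling d B (i', c') = B (i', c') := by
    intro i' c' h
    rw [mem_diag] at h
    simp only [ExtFilling]
    rw [if_neg (by omega)]
  have neB : ∀ i' c' : ℤ, (i', c') ∈ Diagram d (Zlam d r) → ¬ (i' = i ∧ c' = c) →
      B (i', c') ≠ B (i, c) := by
    intro i' c' h hn e
    have := hinj h hp e
    rw [Prod.mk.injEq] at this
    exact hn this
  set x : ℤ := d + 1 - i with hx
  set b := bcol d r c with hb
  have chain : ∀ (m : ℤ) (v1 v2 : ℕ), v1 ≠ B (i,c) → v2 ≠ B (i,c) →
      (∀ t ≤ L.length, (Inv L t x m ↔ v1 ≤ t)) →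
      (∀ t ≤ L.length, (Inv L t m b ↔ v2 ≤ t)) →
      (B (i,c) < v1 ↔ ¬ B (i,c) < v2) := by
    intro m v1 v2 n1 n2 h1 h2
    have a1 := h1 _ Tl
    have a2 := h2 _ Tl
    have a3 := Tp _ Tl
    have b1 := h1 (B (i,c) - 1) (by omega)
    have b2 := h2 (B (i,c) - 1) (by omega)
    have b3 := Tp (B (i,c) - 1) (by omega)
    unfold Inv at a1 a2 a3 b1 b2 b3
    omega
  have box : ∀ i' c' : ℤ, (i', c') ∈ Diagram d (Zlam d r) → ∀ x' b' : ℤ,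
      x' = d + 1 - i' → b' = bcol d r c' →
      ∀ t ≤ L.length, (Inv L t x' b' ↔ ExtFilling d B (i', c') ≤ t) := by
    rintro i' c' h x' b' rfl rfl
    rw [vdef _ _ h]
    exact (T i' c' h).2.2
  have neV : ∀ i' c' : ℤ, (i', c') ∈ Diagram d (Zlam d r) → ¬ (i' = i ∧ c' = c) →
      ExtFilling d B (i', c') ≠ B (i, c) := by
    intro i' c' h hn
    rw [vdef _ _ h]
    exact neB _ _ h hn
  have self : ¬ B (i,c) < ExtFilling d B (i, c) := by
    rw [vdef _ _ hp]; omega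
  have S1 : ∀ c', c < c' → 1 ≤ c' → c' ≤ r → B (i,c) < ExtFilling d B (i, c') := by
    intro c' h1 h2 h3
    have hm : (i, c') ∈ Diagram d (Zlam d r) := by rw [mem_diag]; omega
    have hbx := box i c' hm x (-(d + c')) rfl (by
      unfold bcol; rw [if_neg (by omega), if_pos h3]; ring)
    have hl : ExtFilling d B (i, c') ≤ L.length := by
      rw [vdef _ _ hm]; exact (T i c' hm).1
    have hn := never b (-(d + c')) (by
        rw [hb]; unfold bcol; split_ifs <;> omega) (by
        rw [woi, wi1 c' h2 h3, hb]
        unfold bcol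
        split_ifs with k1 k2
        · rcases eq_or_lt_of_le k1 with k0 | k0
          · rw [k0, wi0]; omega
          · have := wi2 (-c) (by omega) (by omega)
            rw [woi] at this
            omega
        · rw [woi, add_comm c, wi1 c (by omega) k2]; omega
        · omega) _ hl
    have e1 := hbx _ hl
    have e2 := Tp _ hl
    have := neV i c' hm (by omega)
    unfold Inv at hn e1 e2
    omega
  have P1 : ∀ k, 1 ≤ k → c - r < k → -c < k → k < x →
      (B (i,c) < ExtFilling d B (i, r + k) ↔ ¬ B (i,c) < ExtFilling d B (d + 1 - k, c)) := by
    intro k h1 h2 h3 h4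
    have m1 : (i, r + k) ∈ Diagram d (Zlam d r) := by rw [mem_diag]; omega
    have m2 : (d + 1 - k, c) ∈ Diagram d (Zlam d r) := by rw [mem_diag]; omega
    refine chain k _ _ (neV _ _ m1 (by omega)) (neV _ _ m2 (by omega))
      (box _ _ m1 _ _ rfl ?_) (box _ _ m2 _ _ (by ring) rfl)
    unfold bcol
    rw [if_neg (by omega), if_neg (by omega)]; ring
  by_cases hc : 0 ≤ c
  · have := count_nonneg d r i c (fun i' c' => B (i,c) < ExtFilling d B (i', c')) hp' hc self S1
      (fun k h1 h2 h3 => P1 k h1 h2 (by omega) h3)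
    simp only [Prod.mk.eta] at this
    rw [this]
    unfold rk Zlam
    rw [if_pos hc]
    omega
  · have hbc : b = c := by rw [hb]; unfold bcol; rw [if_pos (by omega)]
    have boxs : ∀ i' c' : ℤ, (i', c') ∈ Diagram d (Zlam d r) → ∀ x' b' : ℤ,
        -b' = d + 1 - i' → -x' = bcol d r c' →
        ∀ t ≤ L.length, (Inv L t x' b' ↔ ExtFilling d B (i', c') ≤ t) := by
      intro i' c' h x' b' h1 h2 t ht
      rw [inv_symm]
      exact box i' c' h _ _ h1 h2 t ht
    have m0 : ((d:ℤ) + 1 + c, (0:ℤ)) ∈ Diagram d (Zlam d r) := by rw [mem_diag]; omega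
    have := count_neg d r i c (fun i' c' => B (i,c) < ExtFilling d B (i', c')) hp' (by omega) self S1
      (by
        intro k h1 h2
        have hm : (d + 1 + c, k) ∈ Diagram d (Zlam d r) := by rw [mem_diag]; omega
        have hbx := boxs _ _ hm (d + k) c (by ring) (by
          unfold bcol; rw [if_neg (by omega), if_pos h2]; ring)
        have hl : ExtFilling d B (d + 1 + c, k) ≤ L.length := by
          rw [vdef _ _ hm]; exact (T _ k hm).1
        have hn := never (d + k) x (by omega) (by
          rw [wi1 k h1 h2, wi2 x (by omega) (by omega)]; omega) _ hl
        have e1 := hbx _ hl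
        have e2 := Tp _ hl
        have := neV _ _ hm (by omega)
        rw [hbc] at e2
        unfold Inv at hn e1 e2
        omega)
      (fun k h1 h2 => P1 k (by omega) (by omega) h1 h2)
      (by
        intro c' h1 h2
        have m1 : (i, c') ∈ Diagram d (Zlam d r) := by rw [mem_diag]; omega
        have m2 : (d + 1 + c, r - c') ∈ Diagram d (Zlam d r) := by rw [mem_diag]; omega
        refine chain c' _ _ (neV _ _ m1 (by omega)) (neV _ _ m2 (by omega))
          (box _ _ m1 _ _ rfl ?_) (boxs _ _ m2 _ _ (by rw [hbc]; ring) ?_)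
        · unfold bcol
          rw [if_pos (by omega)]
        · unfold bcol
          rw [if_neg (by omega), if_neg (by omega)]; ring)
      (by
        have m1 : (i, (0:ℤ)) ∈ Diagram d (Zlam d r) := by rw [mem_diag]; omega
        refine chain 0 _ _ (neV _ _ m1 (by omega)) (neV _ _ m0 (by omega))
          (box _ _ m1 _ _ rfl ?_) (boxs _ _ m0 _ _ (by rw [hbc]; ring) ?_)
        · unfold bcol
          rw [if_pos (by omega)]
        · unfold bcol
          rw [if_pos (by omega)]; ring)
      (by
        intro k h1 h2
        have m1 : (i, r + k) ∈ Diagram d (Zlam d r) := by rw [mem_diag]; omega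
        have hk : bcol d r (r + k) = k := by
          unfold bcol
          rw [if_neg (by omega), if_neg (by omega)]; ring
        rcases eq_or_lt_of_le h2 with h2 | h2
        · subst h2
          have e : ExtFilling d B (d + 1 + c, - -c) = ExtFilling d B (d + 1 + c, 0) := by
            rw [vdef _ _ m0]
            simp only [ExtFilling]
            rw [if_pos (by ring)]
          simp only [e]
          refine chain (-c) _ _ (neV _ _ m1 (by omega)) (neV _ _ m0 (by omega))
            (box _ _ m1 _ _ rfl hk.symm) ?_
          intro t ht
          have h := inv_ext L t (-c)
          rw [neg_neg] at h
          rw [hbc, h]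
          refine box _ _ m0 _ _ (by ring) ?_ t ht
          simp [bcol]
        · have m2 : (d + 1 + c, -k) ∈ Diagram d (Zlam d r) := by rw [mem_diag]; omega
          refine chain k _ _ (neV _ _ m1 (by omega)) (neV _ _ m2 (by omega))
            (box _ _ m1 _ _ rfl hk.symm) (boxs _ _ m2 _ _ (by rw [hbc]; ring) ?_)
          unfold bcol
          rw [if_pos (by omega)])
    simp only [Prod.mk.eta] at this
    rw [this]
    unfold rk Zlam
    rw [if_neg hc]
    omega

end BST
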